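/- (Vigilance only-if lemma.) In a finite shutdown scenario, suppose the policy does not ensure vigilance, i.e. P({ω : ω is not vigilant}) > 0. Let A := {o : P(PaH = o) > 0 ∧ E[U | PaH = o] < E[U₀ | PaH = o]}. Then for every δ ∈ ℝ there exists α ∈ ℝ such that, defining the modified utility U'(ω) := −α if (PaH(ω) ∈ A ∧ S(ω) ≠ false) and U'(ω) := U(ω) otherwise, and taking U'₀ := U₀, the following hold: (1) strong vigilance preservation: for every ω, ω is vigilant with respect to (PaH, H, U', U'₀) if and only if it is vigilant with respect to (PaH, H, U, U₀); and (2) E[U'] < E[U'₀] and E[U'] < δ (so the policy neither weakly outperforms shutdown nor is beneficial in the modified model). -/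

import Mathlib

open Finset

attribute [local instance] Classical.propDecidable

/-- Expectation of `X` under the finite probability mass function `P`. -/
noncomputable def pexp {Ω : Type} [Fintype Ω] (P X : Ω → ℝ) : ℝ := ∑ ω, P ω * X ω

/-- Probability of the event `A` under `P`. -/
noncomputable def pr {Ω : Type} [Fintype Ω] (P : Ω → ℝ) (A : Ω → Prop) : ℝ :=
  ∑ ω, if A ω then P ω else 0

/-- Conditional expectation `E[X | A]` under `P`. -/
noncomputable def cexp {Ω : Type} [Fintype Ω] (P X : Ω → ℝ) (A : Ω → Prop) : ℝ :=
  (∑ ω, if A ω then P ω * X ω else 0) / pr P A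

/-- Conditional probability `P(A | B)`. -/
noncomputable def cpr {Ω : Type} [Fintype Ω] (P : Ω → ℝ) (A B : Ω → Prop) : ℝ :=
  pr P (fun ω => A ω ∧ B ω) / pr P B

/-- `ω` is vigilant w.r.t. `(PaH, H, U, U₀)`: if shutting down is conditionally
preferable given the human's information, the human requests shutdown (`H ω = false`). -/
def Vigilant {Ω O : Type} [Fintype Ω] (P : Ω → ℝ) (PaH : Ω → O)
    (H : Ω → Bool) (U U₀ : Ω → ℝ) (ω : Ω) : Prop :=
  cexp P U (fun ω' => PaH ω' = PaH ω) < cexp P U₀ (fun ω' => PaH ω' = PaH ω) → H ω = false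

/-!
On an observation `o ∈ A` the conditional expectations of `U` and `U₀` differ, so by
shutdown-consistency some point of positive probability in the fibre of `o` does not shut down.
Hence the punished event `PaH ω ∈ A ∧ S ω ≠ false` has positive probability, and `E[U']` tends to
`-∞` as `α → ∞`. Vigilance depends only on which observations make shutdown preferable: for large
`α` the punishment only lowers the utility, which keeps every `o ∈ A` in `A`, and it leaves the
fibres outside `A` untouched.
-/

open Filter

section FiniteExpectation

variable {Ω : Type} [Fintype Ω] {P X Y : Ω → ℝ} {A : Ω → Prop} {ω : Ω}

theorem pr_nonneg (hP : ∀ ω, 0 ≤ P ω) : 0 ≤ pr P A :=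
  sum_nonneg fun ω _ => ite_nonneg (hP ω) le_rfl

theorem pr_pos (hP : ∀ ω, 0 ≤ P ω) (hA : A ω) (hω : P ω ≠ 0) : 0 < pr P A :=
  sum_pos' (fun ω _ => ite_nonneg (hP ω) le_rfl)
    ⟨ω, mem_univ ω, by rw [if_pos hA]; exact (hP ω).lt_of_ne' hω⟩

theorem exists_of_pr_ne_zero (h : pr P A ≠ 0) : ∃ ω, A ω := by
  obtain ⟨ω, -, hω⟩ := exists_ne_zero_of_sum_ne_zero h
  exact ⟨ω, (ite_ne_right_iff.mp hω).1⟩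

theorem cexp_mono (hP : ∀ ω, 0 ≤ P ω) (h : ∀ ω, A ω → X ω ≤ Y ω) :
    cexp P X A ≤ cexp P Y A := by
  refine div_le_div_of_nonneg_right (sum_le_sum fun ω _ => ?_) (pr_nonneg hP)
  split_ifs with hA
  · exact mul_le_mul_of_nonneg_left (h ω hA) (hP ω)
  · exact le_rfl

theorem cexp_congr (h : ∀ ω, A ω → P ω ≠ 0 → X ω = Y ω) : cexp P X A = cexp P Y A := by
  refine congrArg (· / pr P A) (sum_congr rfl fun ω _ => ?_)
  split_ifs with hA
  · by_cases hω : P ω = 0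
    · rw [hω, zero_mul, zero_mul]
    · rw [h ω hA hω]
  · rfl

-- On a null event both conditional expectations are the junk value `x / 0 = 0`.
theorem pr_ne_zero_of_cexp_ne (h : cexp P X A ≠ cexp P Y A) : pr P A ≠ 0 := by
  intro h0
  simp only [cexp, h0, div_zero, ne_eq, not_true_eq_false] at h

theorem pexp_ite_neg (P X : Ω → ℝ) (A : Ω → Prop) [DecidablePred A] (α : ℝ) :
    pexp P (fun ω => if A ω then -α else X ω) =
      pexp P (fun ω => if A ω then 0 else X ω) - α * pr P A := by
  simp only [pexp, pr, mul_sum, ← sum_sub_distrib]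
  refine sum_congr rfl fun ω _ => ?_
  split_ifs <;> ring

theorem tendsto_pexp_ite_neg_atBot [DecidablePred A] (X : Ω → ℝ) (hA : 0 < pr P A) :
    Tendsto (fun α => pexp P (fun ω => if A ω then -α else X ω)) atTop atBot := by
  simp only [pexp_ite_neg, sub_eq_add_neg]
  exact tendsto_atBot_add_const_left _ _
    (tendsto_neg_atTop_atBot.comp (tendsto_id.atTop_mul_const hA))

end FiniteExpectation

/-- The set `A` of observations of positive probability given which shutting down has the larger
conditional expected utility. -/
def shutdownPreferred {Ω O : Type} [Fintype Ω] (P : Ω → ℝ) (PaH : Ω → O) (U U₀ : Ω → ℝ) : Set O :=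
  {o | 0 < pr P (fun ω => PaH ω = o) ∧
    cexp P U (fun ω => PaH ω = o) < cexp P U₀ (fun ω => PaH ω = o)}

/-- The modified utility `U'`: failing to shut down on an observation in `A` is worth `-α`. -/
noncomputable def punishedUtility {Ω O : Type} [Fintype Ω] (P : Ω → ℝ) (PaH : Ω → O)
    (S : Ω → Bool) (U U₀ : Ω → ℝ) (α : ℝ) (ω : Ω) : ℝ :=
  if PaH ω ∈ shutdownPreferred P PaH U U₀ ∧ S ω ≠ false then -α else U ω

section Shutdown

variable {Ω O : Type} [Fintype Ω] {P : Ω → ℝ} {PaH : Ω → O} {H S : Ω → Bool} {U U₀ : Ω → ℝ}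
  {α : ℝ} {o : O}

theorem mem_shutdownPreferred_iff (hP : ∀ ω, 0 ≤ P ω) :
    o ∈ shutdownPreferred P PaH U U₀ ↔
      cexp P U (fun ω => PaH ω = o) < cexp P U₀ (fun ω => PaH ω = o) :=
  and_iff_right_of_imp fun h => (pr_nonneg hP).lt_of_ne' (pr_ne_zero_of_cexp_ne h.ne)

theorem shutdownPreferred_nonempty_of_pr_not_vigilant_pos (hP : ∀ ω, 0 ≤ P ω)
    (h : 0 < pr P (fun ω => ¬ Vigilant P PaH H U U₀ ω)) :
    (shutdownPreferred P PaH U U₀).Nonempty := by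
  obtain ⟨ω, hω⟩ := exists_of_pr_ne_zero h.ne'
  exact ⟨PaH ω, (mem_shutdownPreferred_iff hP).mpr (Classical.not_imp.mp hω).1⟩

theorem pr_punished_pos (hP : ∀ ω, 0 ≤ P ω) (hS : ∀ ω, S ω = false → U ω = U₀ ω)
    (hA : (shutdownPreferred P PaH U U₀).Nonempty) :
    0 < pr P (fun ω => PaH ω ∈ shutdownPreferred P PaH U U₀ ∧ S ω ≠ false) := by
  obtain ⟨o, ho⟩ := hA
  obtain ⟨ω, hωo, hPω, hSω⟩ : ∃ ω, PaH ω = o ∧ P ω ≠ 0 ∧ S ω ≠ false := by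
    by_contra! hoff
    exact ho.2.ne (cexp_congr fun ω hωo hPω => hS ω (hoff ω hωo hPω))
  exact pr_pos hP ⟨hωo ▸ ho, hSω⟩ hPω

theorem eventually_punishedUtility_le (P : Ω → ℝ) (PaH : Ω → O) (S : Ω → Bool) (U U₀ : Ω → ℝ) :
    ∀ᶠ α in atTop, ∀ ω, punishedUtility P PaH S U U₀ α ω ≤ U ω := by
  refine eventually_all.mpr fun ω => ?_
  filter_upwards [eventually_ge_atTop (-U ω)] with α hα
  unfold punishedUtility
  split_ifs
  · exact neg_le.mp hα
  · exact le_rfl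

theorem shutdownPreferred_punishedUtility (hP : ∀ ω, 0 ≤ P ω)
    (hle : ∀ ω, punishedUtility P PaH S U U₀ α ω ≤ U ω) :
    shutdownPreferred P PaH (punishedUtility P PaH S U U₀ α) U₀ =
      shutdownPreferred P PaH U U₀ := by
  ext o
  by_cases ho : o ∈ shutdownPreferred P PaH U U₀
  · exact iff_of_true ⟨ho.1, (cexp_mono hP fun ω _ => hle ω).trans_lt ho.2⟩ ho
  · have unpunished : ∀ ω, PaH ω = o → punishedUtility P PaH S U U₀ α ω = U ω :=
      fun ω hωo => if_neg fun hω => ho (hωo ▸ hω.1)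
    rw [mem_shutdownPreferred_iff hP, mem_shutdownPreferred_iff hP,
      cexp_congr fun ω hωo _ => unpunished ω hωo]

theorem vigilant_iff (hP : ∀ ω, 0 ≤ P ω) (ω : Ω) :
    Vigilant P PaH H U U₀ ω ↔ (PaH ω ∈ shutdownPreferred P PaH U U₀ → H ω = false) := by
  rw [mem_shutdownPreferred_iff hP, Vigilant]

theorem stmt7_general (hP : ∀ ω, 0 ≤ P ω) (hS : ∀ ω, S ω = false → U ω = U₀ ω)
    (hA : (shutdownPreferred P PaH U U₀).Nonempty) (δ : ℝ) :
    ∀ᶠ α in atTop,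
      (∀ (H : Ω → Bool) (ω : Ω),
        Vigilant P PaH H (punishedUtility P PaH S U U₀ α) U₀ ω ↔ Vigilant P PaH H U U₀ ω) ∧
      pexp P (punishedUtility P PaH S U U₀ α) < pexp P U₀ ∧
      pexp P (punishedUtility P PaH S U U₀ α) < δ := by
  have pexp_atBot : Tendsto (fun α => pexp P (punishedUtility P PaH S U U₀ α)) atTop atBot :=
    tendsto_pexp_ite_neg_atBot U (pr_punished_pos hP hS hA)
  filter_upwards [eventually_punishedUtility_le P PaH S U U₀,
    pexp_atBot.eventually_lt_atBot (pexp P U₀), pexp_atBot.eventually_lt_atBot δ]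
    with α hle hltU₀ hltδ
  refine ⟨fun H ω => ?_, hltU₀, hltδ⟩
  rw [vigilant_iff hP, vigilant_iff hP, shutdownPreferred_punishedUtility hP hle]

end Shutdown

/-- Vigilance only-if lemma: if the policy does not ensure vigilance,
then for every δ there is a punishment α such that the modified utility
U'(ω) = −α on {PaH ω ∈ A ∧ S ω ≠ false} and U'(ω) = U(ω) otherwise (with U'₀ = U₀,
where A = {o : P(PaH = o) > 0 ∧ E[U|PaH = o] < E[U₀|PaH = o]}) satisfies:
(1) strong vigilance preservation (vigilance w.r.t. (U', U₀) iff w.r.t. (U, U₀)), and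
(2) E[U'] < E[U'₀] and E[U'] < δ. -/
theorem stmt7 {Ω O : Type} [Fintype Ω] [Fintype O]
    (P : Ω → ℝ) (hP0 : ∀ ω, 0 ≤ P ω) (hP1 : ∑ ω, P ω = 1)
    (PaH : Ω → O) (H S : Ω → Bool) (U U₀ : Ω → ℝ)
    (hSDcons : ∀ ω, S ω = false → U ω = U₀ ω)
    (hNotVig : 0 < pr P (fun ω => ¬ Vigilant P PaH H U U₀ ω)) :
    ∀ δ : ℝ, ∃ α : ℝ, ∃ U' : Ω → ℝ,
      (∀ ω, U' ω =
        if (0 < pr P (fun ω' => PaH ω' = PaH ω) ∧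
              cexp P U (fun ω' => PaH ω' = PaH ω) <
                cexp P U₀ (fun ω' => PaH ω' = PaH ω)) ∧ S ω ≠ false
        then -α else U ω) ∧
      (∀ ω, Vigilant P PaH H U' U₀ ω ↔ Vigilant P PaH H U U₀ ω) ∧
      pexp P U' < pexp P U₀ ∧ pexp P U' < δ := by
  intro δ
  have hA := shutdownPreferred_nonempty_of_pr_not_vigilant_pos hP0 hNotVig
  obtain ⟨α, hvig, hlt⟩ := (stmt7_general hP0 hSDcons hA δ).exists
  exact ⟨α, punishedUtility P PaH S U U₀ α, fun _ => if_congr Iff.rfl rfl rfl, hvig H, hlt⟩
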